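/- Every connected elder graph H contains a vertex v from which every vertex of H is reachable by a directed path. -/

import Mathlib

/-- A directed graph on a vertex type `V`: a set of ordered pairs of distinct vertices
such that no pair of vertices is joined in both directions. -/
structure Dgraph (V : Type) where
  adj : V → V → Prop
  asym : ∀ u v, adj u v → ¬ adj v u

/-- Two distinct non-adjacent vertices `u`, `v` form a fork if there is `w` with
edges `(u,w)` and `(v,w)`. -/
def Dgraph.Fork {V : Type} (H : Dgraph V) (u v : V) : Prop :=
  u ≠ v ∧ ¬ H.adj u v ∧ ¬ H.adj v u ∧ ∃ w, H.adj u w ∧ H.adj v w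

/-- An elder graph is a directed graph with no fork. -/
def Dgraph.Elder {V : Type} (H : Dgraph V) : Prop :=
  ∀ u v, ¬ H.Fork u v

/-- A directed graph is connected if its underlying undirected graph is connected. -/
def Dgraph.Connected {V : Type} (H : Dgraph V) : Prop :=
  Nonempty V ∧ ∀ u v : V, Relation.ReflTransGen (fun a b => H.adj a b ∨ H.adj b a) u v

open Relation in
/-- In an elder graph, an ancestor and an in-neighbour of the same vertex are comparable
for reachability. -/
theorem Dgraph.Elder.reachable_or_reachable_of_adj {V : Type} {H : Dgraph V} (hH : H.Elder)
    {a b w : V} (ha : ReflTransGen H.adj a w) (hb : H.adj b w) :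
    ReflTransGen H.adj a b ∨ ReflTransGen H.adj b a := by
  induction ha with
  | refl => exact .inr (.single hb)
  | @tail x w hax hxw ih =>
    by_cases hxb : x = b
    · exact .inl (hxb ▸ hax)
    by_cases h₁ : H.adj x b
    · exact .inl (hax.tail h₁)
    by_cases h₂ : H.adj b x
    · exact ih h₂
    exact (hH x b ⟨hxb, h₁, h₂, w, hxw, hb⟩).elim

open Relation in
/-- A relation on a nonempty finite type has an element that reaches all of its ancestors. -/
theorem Relation.ReflTransGen.exists_forall_symm {V : Type*} [Finite V] [Nonempty V]
    (r : V → V → Prop) :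
    ∃ v, ∀ u, ReflTransGen r u v → ReflTransGen r v u := by
  obtain ⟨v, hv⟩ := Finite.exists_max fun v => {x | ReflTransGen r v x}.ncard
  refine ⟨v, fun u huv => ?_⟩
  have hsub : {x | ReflTransGen r v x} ⊆ {x | ReflTransGen r u x} := fun x hx => huv.trans hx
  have heq := Set.eq_of_subset_of_ncard_le hsub (hv u)
  exact heq.ge (ReflTransGen.refl : ReflTransGen r u u)

/-- Every connected elder graph `H` contains a vertex `v` from which every vertex of
`H` is reachable by a directed path. -/
theorem elder_connected_exists_source {V : Type} [Fintype V] (H : Dgraph V)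
    (helder : H.Elder) (hconn : H.Connected) :
    ∃ v : V, ∀ u : V, Relation.ReflTransGen H.adj v u := by
  have := hconn.1
  obtain ⟨v, hv⟩ := Relation.ReflTransGen.exists_forall_symm H.adj
  refine ⟨v, fun u => ?_⟩
  induction hconn.2 v u with
  | refl => exact .refl
  | tail _ hpq ih =>
    rcases hpq with h | h
    · exact ih.tail h
    · exact (helder.reachable_or_reachable_of_adj ih h).elim id (hv _)
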